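/- arXiv:2401.09129 — 6 statements merged into one kernel-verified Lean document; each statement's English description precedes it below -/
import Mathlib

section
/- Fix a real number c with 0 ≤ c < 1 and set ξ∨ = 2−c. Then ψ₂(t,ξ∨) ≤ 0 for all t ∈ [−1,1] and ψ₂(0,ξ∨) = 0; moreover, for every ξ > 0 such that ψ₂(t,ξ) ≤ 0 for all t ∈ [−1,1], one has ξ ≤ 2−c and sup over t ∈ [−1,1] of |ψ₂(t,ξ)| is at least sup over t ∈ [−1,1] of |ψ₂(t,ξ∨)|; i.e., ξ∨ = 2−c induces the optimal inner quadratic G⁰ approximant. -/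
/-- Simplified radial error of the quadratic G⁰ Bézier approximant of the unit circular arc. -/
noncomputable def psi2 (c t ξ : ℝ) : ℝ :=
  (1/8) * (1 - t^2) * (2*(1 - t^2)*ξ^2 + 4*c*(1 + t^2)*ξ - 8 + 2*c^2*(1 - t^2))

/-- Sup over `t ∈ [−1,1]` of `|f t|`. -/
noncomputable def errSup (f : ℝ → ℝ) : ℝ :=
  sSup ((fun t => |f t|) '' Set.Icc (-1 : ℝ) 1)

/-!
For `0 ≤ c` the error `ψ₂(t, ξ)` increases with `ξ ≥ 0` at every `t ∈ [-1, 1]`, so among inner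
approximants, whose error is nonpositive, the largest `ξ` has the smallest error in absolute value,
even pointwise. The binding constraint is the midpoint of the arc, where `4 ψ₂(0, ξ) = (ξ + c)² - 4`
forces `ξ ≤ 2 - c`. This extreme value is itself admissible, because
`ψ₂(t, 2 - c) = -(1 - c)² t² (1 - t²)`.
-/

open Set

lemma errSup_le_errSup {f g : ℝ → ℝ} (hg : BddAbove ((fun t => |g t|) '' Icc (-1 : ℝ) 1))
    (hfg : ∀ t ∈ Icc (-1 : ℝ) 1, |f t| ≤ |g t|) : errSup f ≤ errSup g := by
  refine csSup_le ((nonempty_Icc.2 (by norm_num)).image _) (forall_mem_image.2 fun t ht => ?_)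
  exact (hfg t ht).trans (le_csSup hg (mem_image_of_mem _ ht))

lemma one_sub_sq_nonneg_of_mem_Icc {t : ℝ} (ht : t ∈ Icc (-1 : ℝ) 1) : 0 ≤ 1 - t ^ 2 :=
  sub_nonneg.2 ((sq_le_one_iff_abs_le_one t).2 (abs_le.2 ht))

lemma continuous_psi2 (c ξ : ℝ) : Continuous fun t => psi2 c t ξ := by
  unfold psi2
  fun_prop

lemma bddAbove_abs_psi2_image_Icc (c ξ a b : ℝ) :
    BddAbove ((fun t => |psi2 c t ξ|) '' Icc a b) :=
  isCompact_Icc.bddAbove_image (continuous_psi2 c ξ).abs.continuousOn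

lemma psi2_zero (c ξ : ℝ) : psi2 c 0 ξ = ((ξ + c) ^ 2 - 2 ^ 2) / 4 := by
  unfold psi2
  ring

lemma psi2_two_sub (c t : ℝ) : psi2 c t (2 - c) = -((1 - c) ^ 2 * t ^ 2 * (1 - t ^ 2)) := by
  unfold psi2
  ring

lemma psi2_two_sub_nonpos (c : ℝ) {t : ℝ} (ht : t ∈ Icc (-1 : ℝ) 1) : psi2 c t (2 - c) ≤ 0 := by
  have := one_sub_sq_nonneg_of_mem_Icc ht
  rw [psi2_two_sub, neg_nonpos]
  positivity

lemma le_two_sub_of_psi2_zero_nonpos {c ξ : ℝ} (h : psi2 c 0 ξ ≤ 0) : ξ ≤ 2 - c := by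
  have hsq : (ξ + c) ^ 2 ≤ 2 ^ 2 := by
    rw [psi2_zero] at h
    linarith
  exact le_sub_iff_add_le.2 (le_of_sq_le_sq hsq zero_le_two)

lemma monotoneOn_psi2 {c t : ℝ} (hc : 0 ≤ c) (ht : t ∈ Icc (-1 : ℝ) 1) :
    MonotoneOn (psi2 c t) (Ici 0) := by
  intro ξ (hξ : 0 ≤ ξ) η _ hξη
  have := one_sub_sq_nonneg_of_mem_Icc ht
  unfold psi2
  gcongr

lemma abs_psi2_le_abs_psi2 {c t ξ η : ℝ} (hc : 0 ≤ c) (ht : t ∈ Icc (-1 : ℝ) 1)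
    (hξ : 0 ≤ ξ) (hξη : ξ ≤ η) (hη : psi2 c t η ≤ 0) : |psi2 c t η| ≤ |psi2 c t ξ| :=
  abs_le_abs_of_nonpos hη (monotoneOn_psi2 hc ht hξ (hξ.trans hξη) hξη)

/-- `ξ∨ = 2 − c` induces the optimal inner quadratic G⁰ approximant. -/
theorem stmt_1 (c : ℝ) (hc0 : 0 ≤ c) (hc1 : c < 1) :
    (∀ t ∈ Set.Icc (-1 : ℝ) 1, psi2 c t (2 - c) ≤ 0) ∧
    psi2 c 0 (2 - c) = 0 ∧
    ∀ ξ > (0 : ℝ), (∀ t ∈ Set.Icc (-1 : ℝ) 1, psi2 c t ξ ≤ 0) →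
      ξ ≤ 2 - c ∧ errSup (fun t => psi2 c t (2 - c)) ≤ errSup (fun t => psi2 c t ξ) := by
  refine ⟨fun t ht => psi2_two_sub_nonpos c ht, by simp [psi2_two_sub], fun ξ hξ h_inner => ?_⟩
  have hξ_le : ξ ≤ 2 - c := le_two_sub_of_psi2_zero_nonpos (h_inner 0 (by simp))
  refine ⟨hξ_le, errSup_le_errSup (bddAbove_abs_psi2_image_Icc c ξ (-1) 1) fun t ht => ?_⟩
  exact abs_psi2_le_abs_psi2 hc0 ht hξ.le hξ_le (psi2_two_sub_nonpos c ht)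
end

section
/- Fix a real number c with 0 < c < 1 and set β₃ = (c√(1−c²) + √(3−8c+6c²−c⁴))/2. Then for all real t, ψ₄(t,β₃) = −(1/4)(1−c)⁴(2+c−√(3+4c+c²))² t²(1−t²)³; in particular ψ₄(t,β₃) ≤ 0 for all t ∈ [−1,1]. -/
noncomputable def alpha1 (c : ℝ) : ℝ := -(Real.sqrt (1 - c^2)/2) * (Real.sqrt (3 + c^2) + c)
noncomputable def alpha2 (c : ℝ) : ℝ := (Real.sqrt (1 - c^2)/2) * (Real.sqrt (3 + c^2) - c)
noncomputable def beta1 (c : ℝ) : ℝ :=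
  (c*Real.sqrt (1 - c^2) - Real.sqrt (3 + 8*c + 6*c^2 - c^4))/2
noncomputable def beta2 (c : ℝ) : ℝ :=
  (c*Real.sqrt (1 - c^2) - Real.sqrt (3 - 8*c + 6*c^2 - c^4))/2
noncomputable def beta3 (c : ℝ) : ℝ :=
  (c*Real.sqrt (1 - c^2) + Real.sqrt (3 - 8*c + 6*c^2 - c^4))/2
noncomputable def beta4 (c : ℝ) : ℝ :=
  (c*Real.sqrt (1 - c^2) + Real.sqrt (3 + 8*c + 6*c^2 - c^4))/2

/-- Simplified radial error of the quartic G² Bézier approximant of the unit circular arc. -/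
noncomputable def psi4 (c t ξ : ℝ) : ℝ :=
  ((t^2 - 1)^3/(64*c^2)) *
    (16*(ξ - alpha1 c)^2*(ξ - alpha2 c)^2*t^2
      - 16*(ξ - beta1 c)*(ξ - beta2 c)*(ξ - beta3 c)*(ξ - beta4 c))

/-!
At `ξ = β₃` the second product in `ψ₄` vanishes, so `ψ₄(t, β₃)` is `(t² - 1)³` times a nonnegative
multiple of `((β₃ - α₁)(β₃ - α₂))²`. Writing `s = √(1 - c²)`, the numbers `α₁, α₂` are the roots of
`x² + c s x - 3 (1 - c²) / 4`, while `β₃` is a root of `x² - c s x - (1 - c)(3 - 5c) / 4`.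
Eliminating `x²` gives `(β₃ - α₁)(β₃ - α₂) = 2c (s β₃ - (1 - c))`, and the product of radicals
in `s β₃` collapses because `(1 - c²)(3 - 8c + 6c² - c⁴) = (1 - c)⁴ (3 + 4c + c²)`.
-/

section

variable {c t : ℝ}

lemma beta_discrim_nonneg (hc₃ : -3 ≤ c) (hc₁ : c ≤ 1) : 0 ≤ 3 - 8*c + 6*c^2 - c^4 := by
  have factorization : 3 - 8*c + 6*c^2 - c^4 = (1 - c)^3 * (3 + c) := by ring
  rw [factorization]
  exact mul_nonneg (pow_nonneg (by linarith) 3) (by linarith)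

lemma sqrt_one_sub_sq_mul_sqrt_beta_discrim (hc₃ : -3 ≤ c) (hc₁ : c ≤ 1) :
    √(1 - c^2) * √(3 - 8*c + 6*c^2 - c^4) = (1 - c)^2 * √(3 + 4*c + c^2) := by
  calc √(1 - c^2) * √(3 - 8*c + 6*c^2 - c^4)
      = √((1 - c^2) * (3 - 8*c + 6*c^2 - c^4)) :=
        (Real.sqrt_mul' _ (beta_discrim_nonneg hc₃ hc₁)).symm
    _ = √(((1 - c)^2)^2 * (3 + 4*c + c^2)) := by ring_nf
    _ = (1 - c)^2 * √(3 + 4*c + c^2) := by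
        rw [Real.sqrt_mul (sq_nonneg _), Real.sqrt_sq (sq_nonneg _)]

lemma sq_sqrt_one_sub_sq (hc : |c| ≤ 1) : √(1 - c^2)^2 = 1 - c^2 :=
  Real.sq_sqrt (sub_nonneg.2 ((sq_le_one_iff_abs_le_one c).2 hc))

lemma sub_alpha1_mul_sub_alpha2 (hc : |c| ≤ 1) (x : ℝ) :
    (x - alpha1 c) * (x - alpha2 c) = x^2 + c * √(1 - c^2) * x - 3/4 * (1 - c^2) := by
  have sum_eq : alpha1 c + alpha2 c = -(c * √(1 - c^2)) := by
    unfold alpha1 alpha2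
    ring
  have prod_eq : alpha1 c * alpha2 c = -(3/4 * (1 - c^2)) := by
    have hu : √(3 + c^2)^2 = 3 + c^2 := Real.sq_sqrt (by positivity)
    calc alpha1 c * alpha2 c = -(√(1 - c^2)^2 / 4 * (√(3 + c^2)^2 - c^2)) := by
          unfold alpha1 alpha2
          ring
      _ = -(3/4 * (1 - c^2)) := by
          rw [sq_sqrt_one_sub_sq hc, hu]
          ring
  linear_combination prod_eq - x * sum_eq

lemma beta3_sq (hc : |c| ≤ 1) :
    beta3 c^2 = c * √(1 - c^2) * beta3 c + (1 - c) * (3 - 5*c) / 4 := by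
  obtain ⟨hc_neg_one, hc_one⟩ := abs_le.1 hc
  have hq : √(3 - 8*c + 6*c^2 - c^4)^2 = 3 - 8*c + 6*c^2 - c^4 :=
    Real.sq_sqrt (beta_discrim_nonneg (by linarith) hc_one)
  unfold beta3
  linear_combination hq / 4 - c^2 / 4 * sq_sqrt_one_sub_sq hc

lemma sqrt_one_sub_sq_mul_beta3 (hc : |c| ≤ 1) :
    √(1 - c^2) * beta3 c = (c * (1 - c^2) + (1 - c)^2 * √(3 + 4*c + c^2)) / 2 := by
  obtain ⟨hc_neg_one, hc_one⟩ := abs_le.1 hc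
  unfold beta3
  linear_combination c / 2 * sq_sqrt_one_sub_sq hc +
    sqrt_one_sub_sq_mul_sqrt_beta_discrim (by linarith) hc_one / 2

lemma beta3_sub_alpha1_mul_beta3_sub_alpha2 (hc : |c| ≤ 1) :
    (beta3 c - alpha1 c) * (beta3 c - alpha2 c) =
      -(c * (1 - c)^2 * (2 + c - √(3 + 4*c + c^2))) := by
  calc (beta3 c - alpha1 c) * (beta3 c - alpha2 c)
      = beta3 c^2 + c * √(1 - c^2) * beta3 c - 3/4 * (1 - c^2) :=
        sub_alpha1_mul_sub_alpha2 hc _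
    _ = 2 * c * (√(1 - c^2) * beta3 c - (1 - c)) := by
        rw [beta3_sq hc]
        ring
    _ = -(c * (1 - c)^2 * (2 + c - √(3 + 4*c + c^2))) := by
        rw [sqrt_one_sub_sq_mul_beta3 hc]
        ring

lemma psi4_beta3 (c t : ℝ) :
    psi4 c t (beta3 c) =
      (t^2 - 1)^3 / (4 * c^2) * (((beta3 c - alpha1 c) * (beta3 c - alpha2 c))^2 * t^2) := by
  unfold psi4
  ring

lemma psi4_beta3_eq (hc₀ : c ≠ 0) (hc : |c| ≤ 1) :
    psi4 c t (beta3 c) =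
      -(1/4)*(1 - c)^4*(2 + c - √(3 + 4*c + c^2))^2*t^2*(1 - t^2)^3 := by
  rw [psi4_beta3, beta3_sub_alpha1_mul_beta3_sub_alpha2 hc]
  field_simp
  ring

lemma psi4_beta3_nonpos (ht : |t| ≤ 1) : psi4 c t (beta3 c) ≤ 0 := by
  have ht_cube : (t^2 - 1)^3 ≤ 0 :=
    Odd.pow_nonpos (by decide) (sub_nonpos.2 ((sq_le_one_iff_abs_le_one t).2 ht))
  rw [psi4_beta3]
  exact mul_nonpos_of_nonpos_of_nonneg
    (div_nonpos_of_nonpos_of_nonneg ht_cube (by positivity)) (by positivity)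

end

theorem stmt_6_general (c : ℝ) (hc₀ : c ≠ 0) (hc : |c| ≤ 1) :
    (∀ t : ℝ, psi4 c t (beta3 c) =
      -(1/4)*(1 - c)^4*(2 + c - √(3 + 4*c + c^2))^2*t^2*(1 - t^2)^3) ∧
    ∀ t ∈ Set.Icc (-1 : ℝ) 1, psi4 c t (beta3 c) ≤ 0 :=
  ⟨fun _ => psi4_beta3_eq hc₀ hc, fun _ ht => psi4_beta3_nonpos (abs_le.2 ht)⟩

/-- Explicit form of `ψ₄(·,β₃)`; in particular it is nonpositive on `[−1,1]`. -/
theorem stmt_6 (c : ℝ) (hc0 : 0 < c) (hc1 : c < 1) :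
    (∀ t : ℝ, psi4 c t (beta3 c) =
      -(1/4)*(1 - c)^4*(2 + c - Real.sqrt (3 + 4*c + c^2))^2*t^2*(1 - t^2)^3) ∧
    ∀ t ∈ Set.Icc (-1 : ℝ) 1, psi4 c t (beta3 c) ≤ 0 :=
  stmt_6_general c hc0.ne' (abs_le.2 ⟨by linarith, hc1.le⟩)
end

section
/- Fix a real number c with 0 < c < 1. There exists a unique ξ∧ ∈ [δ₂,∞) with td(ξ∧) = 0; this ξ∧ satisfies ξ∧ < β₃ and ψ₄(t,ξ∧) ≥ 0 for all t ∈ [−1,1]; moreover, for every ξ ≥ 0 such that ψ₄(t,ξ) ≥ 0 for all t ∈ [−1,1], sup over t ∈ [−1,1] of |ψ₄(t,ξ)| is at least sup over t ∈ [−1,1] of |ψ₄(t,ξ∧)|; i.e., ξ∧ induces the optimal outer quartic G² approximant. -/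
noncomputable def delta2 (c : ℝ) : ℝ :=
  (-2*c + Real.sqrt (9 - 2*c^2 - 3*c^4))/(6*Real.sqrt (1 - c^2))

/-- `td(ξ)` equals the third derivative at `t = 1` of the quartic G² radial error `ψ₄(·,ξ)`. -/
noncomputable def td (c ξ : ℝ) : ℝ :=
  (48*Real.sqrt (1 - c^2)/c)*ξ^3 + 48*ξ^2
    - 12*Real.sqrt (1 - c^2)*(3/c + c)*ξ + 12*(1 - c^2)

/-!
Up to the nonnegative factor `(1 - t²)³ / (4c²)`, the error `ψ₄(·, ξ)` is `B(ξ) - A(ξ) t²`, where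
`A = (ξ - α₁)²(ξ - α₂)²` and `B = (ξ - β₁)(ξ - β₂)(ξ - β₃)(ξ - β₄)`. As `A ≥ 0`, the approximant is
outer iff `A(ξ) ≤ B(ξ)`, and then its error is attained at `t = 0` and equals `B(ξ) / (4c²)`. Since
`A - B = (c² / 12) td`, the outer parameters are those with `td(ξ) ≤ 0`. The cubic `td` has its
local minimum at `δ₂` and is negative at the common midpoint `m` of `β₁, β₄` and of `β₂, β₃`, so its
zero `ξ∧` beyond `δ₂` is the largest outer parameter. It remains to minimize `B`, a function of
`(ξ - m)²` that decreases on `[m, β₃]`, where `ξ∧ < β₃` because `td(β₃) > 0`. Outer parameters in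
`[0, m]` are no better, because the reflection `ξ ↦ 2m - ξ` preserves `B` and, for these parameters,
does not increase `A`.
-/

open Set Filter Topology

section Cubic

variable {a b d p : ℝ}

theorem strictMonoOn_cubic_Ici (ha : 0 < a) (hb : 0 ≤ b) (hd : 0 ≤ d)
    (hcrit : 3 * a * d ^ 2 + 2 * b * d = p) (q : ℝ) :
    StrictMonoOn (fun x => a * x ^ 3 + b * x ^ 2 - p * x + q) (Ici d) := by
  intro x hx y hy hxy
  rw [mem_Ici] at hx hy
  have hslope : 0 < a * (x ^ 2 + x * y + y ^ 2 - 3 * d ^ 2) + b * (x + y - 2 * d) := by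
    have hquad : 0 < x ^ 2 + x * y + y ^ 2 - 3 * d ^ 2 := by nlinarith
    have hlin : 0 ≤ b * (x + y - 2 * d) := mul_nonneg hb (by linarith)
    positivity
  have := mul_pos (sub_pos.2 hxy) hslope
  subst hcrit
  linarith

theorem strictAntiOn_cubic_Icc (ha : 0 < a) (hb : 0 ≤ b)
    (hcrit : 3 * a * d ^ 2 + 2 * b * d = p) (q : ℝ) :
    StrictAntiOn (fun x => a * x ^ 3 + b * x ^ 2 - p * x + q) (Icc 0 d) := by
  rintro x ⟨hx0, hxd⟩ y ⟨hy0, hyd⟩ hxy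
  have hslope : 0 < a * (3 * d ^ 2 - (x ^ 2 + x * y + y ^ 2)) + b * (2 * d - (x + y)) := by
    have hquad : 0 < 3 * d ^ 2 - (x ^ 2 + x * y + y ^ 2) := by nlinarith
    have hlin : 0 ≤ b * (2 * d - (x + y)) := mul_nonneg hb (by linarith)
    positivity
  have := mul_pos (sub_pos.2 hxy) hslope
  subst hcrit
  linarith

end Cubic

theorem errSup_eq_of_isMaxOn {f : ℝ → ℝ} {t₀ : ℝ} (ht₀ : t₀ ∈ Icc (-1 : ℝ) 1)
    (hf : ∀ t ∈ Icc (-1 : ℝ) 1, 0 ≤ f t) (hmax : IsMaxOn f (Icc (-1) 1) t₀) :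
    errSup f = f t₀ := by
  refine IsGreatest.csSup_eq ⟨⟨t₀, ht₀, abs_of_nonneg (hf t₀ ht₀)⟩, ?_⟩
  rintro _ ⟨t, ht, rfl⟩
  exact (abs_of_nonneg (hf t ht)).trans_le (hmax ht)

/-- The coefficient `A(ξ)` of `-t²` in `ψ₄`, normalized to be monic in `ξ`. -/
noncomputable def alphaQuartic (c ξ : ℝ) : ℝ :=
  (ξ - alpha1 c) ^ 2 * (ξ - alpha2 c) ^ 2

/-- The constant coefficient `B(ξ)` of `ψ₄` as a polynomial in `t²`, normalized to be monic
in `ξ`. -/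
noncomputable def betaQuartic (c ξ : ℝ) : ℝ :=
  (ξ - beta1 c) * (ξ - beta2 c) * (ξ - beta3 c) * (ξ - beta4 c)

/-- The common midpoint `m` of `β₁, β₄` and of `β₂, β₃`; its negative is the midpoint
of `α₁, α₂`. -/
noncomputable def betaMid (c : ℝ) : ℝ := c * √(1 - c ^ 2) / 2

/-- The parameter `ξ` induces an outer approximant. -/
def IsOuter (c ξ : ℝ) : Prop := ∀ t ∈ Icc (-1 : ℝ) 1, 0 ≤ psi4 c t ξ

section QuarticApproximant

variable {c ξ : ℝ}

theorem psi4_eq (c t ξ : ℝ) :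
    psi4 c t ξ = (1 - t ^ 2) ^ 3 / (4 * c ^ 2) * (betaQuartic c ξ - alphaQuartic c ξ * t ^ 2) := by
  unfold psi4 alphaQuartic betaQuartic
  ring

theorem alphaQuartic_nonneg (c ξ : ℝ) : 0 ≤ alphaQuartic c ξ := by
  unfold alphaQuartic
  positivity

theorem betaMid_sq (hc : c ^ 2 ≤ 1) : betaMid c ^ 2 = c ^ 2 * (1 - c ^ 2) / 4 := by
  have hs : √(1 - c ^ 2) ^ 2 = 1 - c ^ 2 := Real.sq_sqrt (by linarith)
  unfold betaMid
  linear_combination c ^ 2 / 4 * hs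

theorem betaMid_pos (hc0 : 0 < c) (hc1 : c < 1) : 0 < betaMid c := by
  have : 0 < √(1 - c ^ 2) := Real.sqrt_pos.2 (by nlinarith)
  unfold betaMid
  positivity

theorem betaMid_le_beta3 (c : ℝ) : betaMid c ≤ beta3 c := by
  unfold betaMid beta3
  linarith [Real.sqrt_nonneg (3 - 8 * c + 6 * c ^ 2 - c ^ 4)]

theorem beta3_sub_betaMid_sq (hc : c ^ 2 ≤ 1) :
    (beta3 c - betaMid c) ^ 2 = (1 - c) ^ 3 * (3 + c) / 4 := by
  obtain ⟨hl, hu⟩ := abs_le.1 ((sq_le_one_iff_abs_le_one c).1 hc)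
  have hr : √(3 - 8 * c + 6 * c ^ 2 - c ^ 4) ^ 2 = 3 - 8 * c + 6 * c ^ 2 - c ^ 4 := by
    have heq : 3 - 8 * c + 6 * c ^ 2 - c ^ 4 = (1 - c) ^ 3 * (3 + c) := by ring
    rw [heq, Real.sq_sqrt (mul_nonneg (pow_nonneg (by linarith) 3) (by linarith))]
  unfold beta3 betaMid
  linear_combination hr / 4

theorem alphaQuartic_eq (hc : c ^ 2 ≤ 1) (ξ : ℝ) :
    alphaQuartic c ξ = ((ξ + betaMid c) ^ 2 - (1 - c ^ 2) * (3 + c ^ 2) / 4) ^ 2 := by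
  have hs : √(1 - c ^ 2) ^ 2 = 1 - c ^ 2 := Real.sq_sqrt (by linarith)
  have hr : √(3 + c ^ 2) ^ 2 = 3 + c ^ 2 := Real.sq_sqrt (by positivity)
  have hprod : (ξ - alpha1 c) * (ξ - alpha2 c) =
      (ξ + betaMid c) ^ 2 - √(1 - c ^ 2) ^ 2 * √(3 + c ^ 2) ^ 2 / 4 := by
    unfold alpha1 alpha2 betaMid
    ring
  rw [alphaQuartic, ← mul_pow, hprod, hs, hr]

theorem betaQuartic_eq (hc : c ^ 2 ≤ 1) (ξ : ℝ) :
    betaQuartic c ξ = ((1 - c) ^ 3 * (3 + c) / 4 - (ξ - betaMid c) ^ 2) *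
      ((1 + c) ^ 3 * (3 - c) / 4 - (ξ - betaMid c) ^ 2) := by
  obtain ⟨hl, hu⟩ := abs_le.1 ((sq_le_one_iff_abs_le_one c).1 hc)
  have hr : √(3 + 8 * c + 6 * c ^ 2 - c ^ 4) ^ 2 = (1 + c) ^ 3 * (3 - c) := by
    have heq : 3 + 8 * c + 6 * c ^ 2 - c ^ 4 = (1 + c) ^ 3 * (3 - c) := by ring
    rw [heq, Real.sq_sqrt (mul_nonneg (pow_nonneg (by linarith) 3) (by linarith))]
  rw [← beta3_sub_betaMid_sq hc, ← hr]
  unfold betaQuartic beta1 beta2 beta3 beta4 betaMid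
  ring

theorem sq_div_twelve_mul_td (hc0 : c ≠ 0) (ξ : ℝ) :
    c ^ 2 / 12 * td c ξ = 8 * betaMid c * ξ ^ 3 + 4 * c ^ 2 * ξ ^ 2
      - 2 * betaMid c * (3 + c ^ 2) * ξ + c ^ 2 * (1 - c ^ 2) := by
  unfold td betaMid
  field_simp
  ring

theorem alphaQuartic_sub_betaQuartic (hc0 : c ≠ 0) (hc : c ^ 2 ≤ 1) (ξ : ℝ) :
    alphaQuartic c ξ - betaQuartic c ξ = c ^ 2 / 12 * td c ξ := by
  rw [alphaQuartic_eq hc, betaQuartic_eq hc, sq_div_twelve_mul_td hc0]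
  linear_combination (8 * ξ * betaMid c + 4 * c ^ 2) * betaMid_sq hc

theorem td_nonpos_iff_alphaQuartic_le (hc0 : c ≠ 0) (hc : c ^ 2 ≤ 1) :
    td c ξ ≤ 0 ↔ alphaQuartic c ξ ≤ betaQuartic c ξ := by
  rw [← sub_nonpos (a := alphaQuartic c ξ), alphaQuartic_sub_betaQuartic hc0 hc,
    ← not_lt, ← not_lt, mul_pos_iff_of_pos_left (by positivity)]

theorem isOuter_iff_alphaQuartic_le (hc0 : c ≠ 0) :
    IsOuter c ξ ↔ alphaQuartic c ξ ≤ betaQuartic c ξ := by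
  refine ⟨fun hout => ?_, fun hle t ht => ?_⟩
  · have hlt_one : ∀ t ∈ Ioo (0 : ℝ) 1, alphaQuartic c ξ * t ^ 2 ≤ betaQuartic c ξ := by
      rintro t ⟨ht0, ht1⟩
      have hψ := hout t ⟨by linarith, ht1.le⟩
      have hfactor : 0 < (1 - t ^ 2) ^ 3 / (4 * c ^ 2) := by
        have : 0 < 1 - t ^ 2 := by nlinarith
        positivity
      rw [psi4_eq] at hψ
      exact sub_nonneg.1 (nonneg_of_mul_nonneg_right hψ hfactor)
    have hlim : Tendsto (fun t : ℝ => alphaQuartic c ξ * t ^ 2) (𝓝[<] 1)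
        (𝓝 (alphaQuartic c ξ * 1 ^ 2)) :=
      (Continuous.tendsto (by fun_prop) 1).mono_left nhdsWithin_le_nhds
    rw [one_pow, mul_one] at hlim
    exact le_of_tendsto hlim (eventually_of_mem (Ioo_mem_nhdsLT one_pos) hlt_one)
  · have ht2 : t ^ 2 ≤ 1 := (sq_le_one_iff_abs_le_one t).2 (abs_le.2 ht)
    have hαt : alphaQuartic c ξ * t ^ 2 ≤ alphaQuartic c ξ :=
      mul_le_of_le_one_right (alphaQuartic_nonneg c ξ) ht2
    rw [psi4_eq]
    exact mul_nonneg (div_nonneg (pow_nonneg (by linarith) 3) (by positivity)) (by linarith)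

theorem isOuter_iff_td_nonpos (hc0 : c ≠ 0) (hc : c ^ 2 ≤ 1) : IsOuter c ξ ↔ td c ξ ≤ 0 := by
  rw [isOuter_iff_alphaQuartic_le hc0, td_nonpos_iff_alphaQuartic_le hc0 hc]

theorem IsOuter.errSup_eq (hout : IsOuter c ξ) (hc0 : c ≠ 0) :
    errSup (fun t => psi4 c t ξ) = betaQuartic c ξ / (4 * c ^ 2) := by
  have hα := alphaQuartic_nonneg c ξ
  have hβ : 0 ≤ betaQuartic c ξ := hα.trans ((isOuter_iff_alphaQuartic_le hc0).1 hout)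
  have hzero : psi4 c 0 ξ = betaQuartic c ξ / (4 * c ^ 2) := by
    rw [psi4_eq]
    ring
  rw [← hzero]
  refine errSup_eq_of_isMaxOn (by norm_num) hout fun t ht => ?_
  have ht2 : 0 ≤ 1 - t ^ 2 := sub_nonneg.2 ((sq_le_one_iff_abs_le_one t).2 (abs_le.2 ht))
  have hpow : (1 - t ^ 2) ^ 3 ≤ 1 := pow_le_one₀ ht2 (by linarith [sq_nonneg t])
  calc psi4 c t ξ
      = (1 - t ^ 2) ^ 3 / (4 * c ^ 2) * (betaQuartic c ξ - alphaQuartic c ξ * t ^ 2) :=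
        psi4_eq c t ξ
    _ ≤ (1 - t ^ 2) ^ 3 / (4 * c ^ 2) * betaQuartic c ξ := by
        gcongr
        exact sub_le_self _ (by positivity)
    _ ≤ 1 / (4 * c ^ 2) * betaQuartic c ξ := by gcongr
    _ = psi4 c 0 ξ := by rw [hzero]; ring

theorem delta2_nonneg (hc : c ^ 2 ≤ 1) : 0 ≤ delta2 c := by
  have : 2 * c ≤ √(9 - 2 * c ^ 2 - 3 * c ^ 4) := Real.le_sqrt_of_sq_le (by nlinarith)
  exact div_nonneg (by linarith) (by positivity)

theorem delta2_critical (hc0 : c ≠ 0) (hc : c ^ 2 < 1) :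
    3 * (48 * √(1 - c ^ 2) / c) * delta2 c ^ 2 + 2 * 48 * delta2 c =
      12 * √(1 - c ^ 2) * (3 / c + c) := by
  have hs0 : 0 < √(1 - c ^ 2) := Real.sqrt_pos.2 (by linarith)
  have hs : √(1 - c ^ 2) ^ 2 = 1 - c ^ 2 := Real.sq_sqrt (by linarith)
  have hw : √(9 - 2 * c ^ 2 - 3 * c ^ 4) ^ 2 = 9 - 2 * c ^ 2 - 3 * c ^ 4 :=
    Real.sq_sqrt (by nlinarith)
  unfold delta2
  generalize √(9 - 2 * c ^ 2 - 3 * c ^ 4) = w at hw ⊢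
  generalize √(1 - c ^ 2) = s at hs0 hs ⊢
  field_simp
  linear_combination 144 * hw - 432 * (3 + c ^ 2) * hs

theorem strictMonoOn_td (hc0 : 0 < c) (hc1 : c < 1) : StrictMonoOn (td c) (Ici (delta2 c)) := by
  have hc : c ^ 2 < 1 := by nlinarith
  have : 0 < √(1 - c ^ 2) := Real.sqrt_pos.2 (by linarith)
  exact strictMonoOn_cubic_Ici (by positivity) (by norm_num) (delta2_nonneg hc.le)
    (delta2_critical hc0.ne' hc) _

theorem strictAntiOn_td (hc0 : 0 < c) (hc1 : c < 1) : StrictAntiOn (td c) (Icc 0 (delta2 c)) := by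
  have hc : c ^ 2 < 1 := by nlinarith
  have : 0 < √(1 - c ^ 2) := Real.sqrt_pos.2 (by linarith)
  exact strictAntiOn_cubic_Icc (by positivity) (by norm_num) (delta2_critical hc0.ne' hc) _

theorem td_betaMid (hc0 : c ≠ 0) (hc : c ^ 2 ≤ 1) : td c (betaMid c) = -6 * (1 - c ^ 2) ^ 3 := by
  refine mul_left_cancel₀ (show c ^ 2 / 12 ≠ 0 by positivity) ?_
  rw [sq_div_twelve_mul_td hc0]
  linear_combination (8 * betaMid c ^ 2 + 2 * c ^ 2 * (1 - c ^ 2) + 2 * c ^ 2 - 6) * betaMid_sq hc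

theorem td_betaMid_neg (hc0 : 0 < c) (hc1 : c < 1) : td c (betaMid c) < 0 := by
  have hc : 0 < 1 - c ^ 2 := by nlinarith
  rw [td_betaMid hc0.ne' (by linarith)]
  linarith [pow_pos hc 3]

/-- Equivalent to `α₁ < β₃ < α₂`, since `(β₃ - α₁)(β₃ - α₂) = 4β₃m - 2c(1 - c)`. -/
theorem beta3_mul_betaMid_lt (hc0 : 0 < c) (hc1 : c < 1) :
    beta3 c * betaMid c < c * (1 - c) / 2 := by
  have hc : c ^ 2 ≤ 1 := by nlinarith
  have hgap : 0 < c ^ 2 * (1 - c) ^ 4 / 16 := by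
    have : 0 < 1 - c := sub_pos.2 hc1
    positivity
  have hsq : ((beta3 c - betaMid c) * betaMid c) ^ 2 < (c * (1 - c) ^ 2 * (2 + c) / 4) ^ 2 := by
    rw [mul_pow, beta3_sub_betaMid_sq hc, betaMid_sq hc]
    linarith
  have hlt := lt_of_pow_lt_pow_left₀ 2 (by positivity) hsq
  linarith [betaMid_sq hc]

theorem td_beta3_pos (hc0 : 0 < c) (hc1 : c < 1) : 0 < td c (beta3 c) := by
  have hc : c ^ 2 ≤ 1 := by nlinarith
  have hβ : betaQuartic c (beta3 c) = 0 := by simp [betaQuartic]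
  have hα : 0 < alphaQuartic c (beta3 c) := by
    have hneg : (beta3 c + betaMid c) ^ 2 - (1 - c ^ 2) * (3 + c ^ 2) / 4 < 0 := by
      linarith [beta3_sub_betaMid_sq hc, beta3_mul_betaMid_lt hc0 hc1]
    rw [alphaQuartic_eq hc]
    exact sq_pos_of_neg hneg
  have hsub := alphaQuartic_sub_betaQuartic hc0.ne' hc (beta3 c)
  exact pos_of_mul_pos_right (by linarith) (show 0 ≤ c ^ 2 / 12 by positivity)

theorem td_delta2_neg (hc0 : 0 < c) (hc1 : c < 1) : td c (delta2 c) < 0 := by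
  have hδ := delta2_nonneg (c := c) (by nlinarith)
  refine lt_of_le_of_lt ?_ (td_betaMid_neg hc0 hc1)
  rcases le_total (betaMid c) (delta2 c) with hle | hle
  · exact (strictAntiOn_td hc0 hc1).antitoneOn ⟨(betaMid_pos hc0 hc1).le, hle⟩ ⟨hδ, le_rfl⟩ hle
  · exact (strictMonoOn_td hc0 hc1).monotoneOn self_mem_Ici hle hle

theorem delta2_le_beta3 (hc0 : 0 < c) (hc1 : c < 1) : delta2 c ≤ beta3 c := by
  by_contra! hlt
  have hm0 := (betaMid_pos hc0 hc1).le
  have hmβ := betaMid_le_beta3 c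
  have hanti := (strictAntiOn_td hc0 hc1).antitoneOn ⟨hm0, hmβ.trans hlt.le⟩
    ⟨hm0.trans hmβ, hlt.le⟩ hmβ
  linarith [td_betaMid_neg hc0 hc1, td_beta3_pos hc0 hc1]

theorem exists_td_eq_zero (hc0 : 0 < c) (hc1 : c < 1) : ∃ ξ ∈ Ici (delta2 c), td c ξ = 0 := by
  have hcont : ContinuousOn (td c) (Icc (delta2 c) (beta3 c)) := by
    unfold td
    fun_prop
  obtain ⟨ξ, hξ, hroot⟩ := intermediate_value_Icc (delta2_le_beta3 hc0 hc1) hcont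
    ⟨(td_delta2_neg hc0 hc1).le, (td_beta3_pos hc0 hc1).le⟩
  exact ⟨ξ, hξ.1, hroot⟩

theorem existsUnique_td_eq_zero (hc0 : 0 < c) (hc1 : c < 1) :
    ∃! ξ, ξ ∈ Ici (delta2 c) ∧ td c ξ = 0 := by
  obtain ⟨ξ, hξ, hroot⟩ := exists_td_eq_zero hc0 hc1
  exact ⟨ξ, ⟨hξ, hroot⟩, fun η hη =>
    (strictMonoOn_td hc0 hc1).injOn hη.1 hξ (hη.2.trans hroot.symm)⟩

theorem lt_beta3_of_td_eq_zero (hc0 : 0 < c) (hc1 : c < 1) (hξ : ξ ∈ Ici (delta2 c))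
    (hroot : td c ξ = 0) : ξ < beta3 c :=
  ((strictMonoOn_td hc0 hc1).lt_iff_lt hξ (delta2_le_beta3 hc0 hc1)).1
    (hroot.trans_lt (td_beta3_pos hc0 hc1))

theorem le_of_td_nonpos (hc0 : 0 < c) (hc1 : c < 1) (hξ : ξ ∈ Ici (delta2 c))
    (hroot : td c ξ = 0) {x : ℝ} (hx : td c x ≤ 0) : x ≤ ξ := by
  by_contra! hlt
  exact (hroot ▸ hx).not_gt (strictMonoOn_td hc0 hc1 hξ (hξ.trans hlt.le) hlt)

theorem betaQuartic_reflect (hc : c ^ 2 ≤ 1) (x : ℝ) :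
    betaQuartic c (2 * betaMid c - x) = betaQuartic c x := by
  rw [betaQuartic_eq hc, betaQuartic_eq hc]
  ring

theorem sq_sub_betaMid_le_of_betaQuartic_nonneg (hc0 : 0 < c) (hc1 : c < 1) {x : ℝ} (hx0 : 0 ≤ x)
    (hxm : x ≤ betaMid c) (hβ : 0 ≤ betaQuartic c x) :
    (x - betaMid c) ^ 2 ≤ (beta3 c - betaMid c) ^ 2 := by
  have hc : c ^ 2 ≤ 1 := by nlinarith
  have houter : 0 < (1 + c) ^ 3 * (3 - c) / 4 - (x - betaMid c) ^ 2 := by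
    have hdist : (x - betaMid c) ^ 2 ≤ betaMid c ^ 2 := by nlinarith
    have hmid : c ^ 2 * (1 - c ^ 2) / 4 < (1 + c) ^ 3 * (3 - c) / 4 := by
      have : 0 < 3 + 8 * c + 5 * c ^ 2 := by positivity
      linarith
    rw [betaMid_sq hc] at hdist
    linarith
  rw [betaQuartic_eq hc, ← beta3_sub_betaMid_sq hc] at hβ
  exact sub_nonneg.1 (nonneg_of_mul_nonneg_left hβ houter)

theorem alphaQuartic_reflect_le (hc0 : 0 ≤ c) (hc : c ^ 2 ≤ 1) {x : ℝ} (hxm : x ≤ betaMid c)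
    (hdist : (x - betaMid c) ^ 2 ≤ (beta3 c - betaMid c) ^ 2) :
    alphaQuartic c (2 * betaMid c - x) ≤ alphaQuartic c x := by
  have hm0 : 0 ≤ betaMid c := by
    unfold betaMid
    positivity
  have hgap : 0 ≤ 2 * c * (1 - c) ^ 2 * (2 + c) := by positivity
  rw [beta3_sub_betaMid_sq hc] at hdist
  -- For `P(ξ) = (ξ - α₁)(ξ - α₂)` one has `P(x) ≤ P(2m - x) ≤ -P(x)`.
  rw [alphaQuartic_eq hc, alphaQuartic_eq hc, ← neg_sq ((x + betaMid c) ^ 2 - _)]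
  apply sq_le_sq'
  · linarith [mul_nonneg hm0 (sub_nonneg.2 hxm)]
  · linarith [betaMid_sq hc]

theorem td_reflect_nonpos (hc0 : 0 < c) (hc1 : c < 1) {x : ℝ} (hx0 : 0 ≤ x) (hxm : x ≤ betaMid c)
    (hx : td c x ≤ 0) : td c (2 * betaMid c - x) ≤ 0 := by
  have hc : c ^ 2 ≤ 1 := by nlinarith
  rw [td_nonpos_iff_alphaQuartic_le hc0.ne' hc] at hx ⊢
  have hdist := sq_sub_betaMid_le_of_betaQuartic_nonneg hc0 hc1 hx0 hxm
    ((alphaQuartic_nonneg c x).trans hx)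
  rw [betaQuartic_reflect hc]
  exact (alphaQuartic_reflect_le hc0.le hc hxm hdist).trans hx

theorem antitoneOn_betaQuartic (hc0 : 0 ≤ c) (hc : c ^ 2 ≤ 1) :
    AntitoneOn (betaQuartic c) (Icc (betaMid c) (beta3 c)) := by
  rintro x ⟨hmx, -⟩ y ⟨hmy, hy⟩ hxy
  have hdist : (x - betaMid c) ^ 2 ≤ (y - betaMid c) ^ 2 := by gcongr
  have hradius : (y - betaMid c) ^ 2 ≤ (1 - c) ^ 3 * (3 + c) / 4 := by
    rw [← beta3_sub_betaMid_sq hc]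
    gcongr
  have hradii : (1 - c) ^ 3 * (3 + c) / 4 ≤ (1 + c) ^ 3 * (3 - c) / 4 := by linarith
  rw [betaQuartic_eq hc, betaQuartic_eq hc]
  exact mul_le_mul (sub_le_sub_left hdist _) (sub_le_sub_left hdist _)
    (sub_nonneg.2 (hradius.trans hradii)) (sub_nonneg.2 (hdist.trans hradius))

theorem betaQuartic_le_of_td_nonpos (hc0 : 0 < c) (hc1 : c < 1) (hξ : ξ ∈ Ici (delta2 c))
    (hroot : td c ξ = 0) {x : ℝ} (hx0 : 0 ≤ x) (hx : td c x ≤ 0) :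
    betaQuartic c ξ ≤ betaQuartic c x := by
  have hc : c ^ 2 ≤ 1 := by nlinarith
  wlog hmx : betaMid c ≤ x generalizing x
  · rw [← betaQuartic_reflect hc x]
    have hxm : x ≤ betaMid c := le_of_not_ge hmx
    exact this (by linarith [betaMid_pos hc0 hc1]) (td_reflect_nonpos hc0 hc1 hx0 hxm hx)
      (by linarith)
  have hxξ := le_of_td_nonpos hc0 hc1 hξ hroot hx
  have hξβ := (lt_beta3_of_td_eq_zero hc0 hc1 hξ hroot).le
  exact antitoneOn_betaQuartic hc0.le hc ⟨hmx, hxξ.trans hξβ⟩ ⟨hmx.trans hxξ, hξβ⟩ hxξ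

end QuarticApproximant

/-- The unique zero `ξ∧` of `td` on `[δ₂,∞)` satisfies `ξ∧ < β₃` and induces the optimal
outer quartic G² approximant. -/
theorem stmt_10 (c : ℝ) (hc0 : 0 < c) (hc1 : c < 1) :
    (∃! ξ : ℝ, ξ ∈ Set.Ici (delta2 c) ∧ td c ξ = 0) ∧
    ∀ ξ : ℝ, ξ ∈ Set.Ici (delta2 c) → td c ξ = 0 →
      ξ < beta3 c ∧
      (∀ t ∈ Set.Icc (-1 : ℝ) 1, 0 ≤ psi4 c t ξ) ∧
      ∀ ξ' : ℝ, 0 ≤ ξ' → (∀ t ∈ Set.Icc (-1 : ℝ) 1, 0 ≤ psi4 c t ξ') →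
        errSup (fun t => psi4 c t ξ) ≤ errSup (fun t => psi4 c t ξ') := by
  have hc : c ^ 2 ≤ 1 := by nlinarith
  refine ⟨existsUnique_td_eq_zero hc0 hc1, fun ξ hξ hroot => ?_⟩
  have hout : IsOuter c ξ := (isOuter_iff_td_nonpos hc0.ne' hc).2 hroot.le
  refine ⟨lt_beta3_of_td_eq_zero hc0 hc1 hξ hroot, hout, fun ξ' hξ' hout' => ?_⟩
  have htd' : td c ξ' ≤ 0 := (isOuter_iff_td_nonpos hc0.ne' hc).1 hout'
  rw [hout.errSup_eq hc0.ne', IsOuter.errSup_eq hout' hc0.ne']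
  gcongr
  exact betaQuartic_le_of_td_nonpos hc0 hc1 hξ hroot hξ' htd'
end

section
/- Fix a real number c with 0 ≤ c < 1. The cubic polynomial g₁(ξ) = 2187ξ³ + 3807cξ² + (1953c² − 3840)ξ + 245c³ − 4352c has exactly one positive real zero, and this zero lies in the open interval I = (ξ_min, ξ_max), where ξ_min = (−5c + 8√2·√(9−c²))/27 and ξ_max = (4−c)/3. Moreover c < 1 < ξ_min < ξ_max. -/
noncomputable def g1 (c ξ : ℝ) : ℝ :=
  2187*ξ^3 + 3807*c*ξ^2 + (1953*c^2 - 3840)*ξ + 245*c^3 - 4352*c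

noncomputable def ximin (c : ℝ) : ℝ := (-5*c + 8*Real.sqrt 2*Real.sqrt (9 - c^2))/27

noncomputable def ximax (c : ℝ) : ℝ := (4 - c)/3

/-!
For `0 ≤ c < 1` the leading coefficient of `g₁` is positive, the quadratic one nonnegative and the
constant one nonpositive. Hence `g₁(ξ)/ξ` is strictly increasing on `(0, ∞)`, whatever the sign of
the linear coefficient, so `g₁` has at most one positive zero. Its sign at the two endpoints is
explicit: `g₁(ξ_max) = 64(1 - c)³ > 0`, and reducing `g₁` modulo the quadratic
`81ξ² + 30cξ + 17c² - 128` that vanishes at `ξ_min` leaves `-384(1 - c²)(ξ - c)`, which is negative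
there because `c < 1 < ξ_min`.
-/

open Set

section OrderedField

variable {K : Type*} [Field K] [LinearOrder K] [IsStrictOrderedRing K]

theorem strictMonoOn_cubic_div_self {p q r s : K} (hp : 0 < p) (hq : 0 ≤ q) (hs : s ≤ 0) :
    StrictMonoOn (fun x => (p * x ^ 3 + q * x ^ 2 + r * x + s) / x) (Ioi 0) := by
  intro x (hx : 0 < x) y (hy : 0 < y) hxy
  have cross_diff :
      (p * y ^ 3 + q * y ^ 2 + r * y + s) * x - (p * x ^ 3 + q * x ^ 2 + r * x + s) * y =
        (y - x) * (p * (x * y * (x + y)) + q * (x * y) - s) := by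
    ring
  have factor_pos : 0 < p * (x * y * (x + y)) + q * (x * y) - s := by
    have : 0 < p * (x * y * (x + y)) + q * (x * y) := by positivity
    linarith
  rw [div_lt_div_iff₀ hx hy, ← sub_pos, cross_diff]
  exact mul_pos (sub_pos.2 hxy) factor_pos

theorem mem_Ioo_of_strictMonoOn_div_self {f : K → K} {a b x : K}
    (hf : StrictMonoOn (fun x => f x / x) (Ioi 0)) (ha : 0 < a) (hb : 0 < b)
    (hfa : f a < 0) (hfb : 0 < f b) (hx : 0 < x) (hfx : f x = 0) : x ∈ Ioo a b := by
  have hfx_div : f x / x = 0 := by rw [hfx, zero_div]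
  constructor
  · exact (hf.lt_iff_lt ha hx).1 (hfx_div.symm ▸ div_neg_of_neg_of_pos hfa ha)
  · exact (hf.lt_iff_lt hx hb).1 (hfx_div.symm ▸ div_pos hfb hb)

end OrderedField

theorem existsUnique_pos_zero_of_injOn_div_self {f : ℝ → ℝ} {a b : ℝ}
    (hcont : ContinuousOn f (Ioi 0)) (hf : InjOn (fun x => f x / x) (Ioi 0))
    (ha : 0 < a) (hb : 0 < b) (hfa : f a ≤ 0) (hfb : 0 ≤ f b) : ∃! x, 0 < x ∧ f x = 0 := by
  obtain ⟨x, hx, hfx⟩ := isPreconnected_Ioi.intermediate_value ha hb hcont ⟨hfa, hfb⟩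
  refine ⟨x, ⟨hx, hfx⟩, fun y ⟨hy, hfy⟩ => hf hy hx ?_⟩
  simp only [hfx, hfy, zero_div]

section Cubic

variable {c : ℝ}

theorem continuous_g1 (c : ℝ) : Continuous (g1 c) := by
  unfold g1
  fun_prop

theorem strictMonoOn_g1_div_self (hc : 0 ≤ c) (hc' : 245 * c ^ 2 ≤ 4352) :
    StrictMonoOn (fun ξ => g1 c ξ / ξ) (Ioi 0) := by
  have const_nonpos : 245 * c ^ 3 - 4352 * c ≤ 0 := by
    linarith [mul_nonneg hc (sub_nonneg.2 hc')]
  simpa only [g1, add_sub_assoc] using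
    strictMonoOn_cubic_div_self (by norm_num) (by positivity) const_nonpos

theorem ximin_eq_sqrt (c : ℝ) : ximin c = (-5 * c + √(128 * (9 - c ^ 2))) / 27 := by
  have sqrt_128 : √(128 : ℝ) = 8 * √2 := by
    rw [show (128 : ℝ) = 8 ^ 2 * 2 by norm_num, Real.sqrt_mul (by norm_num),
      Real.sqrt_sq (by norm_num)]
  rw [Real.sqrt_mul (by norm_num), sqrt_128, ximin]

theorem ximin_quadratic (hc : c ^ 2 ≤ 9) :
    81 * ximin c ^ 2 + 30 * c * ximin c + 17 * c ^ 2 - 128 = 0 := by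
  have sq_sqrt : √(128 * (9 - c ^ 2)) ^ 2 = 128 * (9 - c ^ 2) := Real.sq_sqrt (by linarith)
  rw [ximin_eq_sqrt]
  linear_combination sq_sqrt / 9

theorem one_lt_ximin (hc : -1 < c) (hc' : c < 1) : 1 < ximin c := by
  have lt_sqrt : 27 + 5 * c < √(128 * (9 - c ^ 2)) := by
    rw [Real.lt_sqrt (by linarith)]
    have factored : 0 < (1 - c) * (47 + 17 * c) := mul_pos (by linarith) (by linarith)
    linarith
  rw [ximin_eq_sqrt]
  linarith

theorem ximin_lt_ximax (hc : c < 1) : ximin c < ximax c := by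
  have sqrt_lt : √(128 * (9 - c ^ 2)) < 36 - 4 * c := by
    rw [Real.sqrt_lt' (by linarith)]
    linarith [pow_pos (sub_pos.2 hc) 2]
  rw [ximin_eq_sqrt, ximax]
  linarith

theorem g1_ximax (c : ℝ) : g1 c (ximax c) = 64 * (1 - c) ^ 3 := by
  unfold g1 ximax
  ring

theorem g1_ximax_pos (hc : c < 1) : 0 < g1 c (ximax c) := by
  rw [g1_ximax]
  exact mul_pos (by norm_num) (pow_pos (sub_pos.2 hc) 3)

theorem g1_ximin (hc : c ^ 2 ≤ 9) :
    g1 c (ximin c) = -(384 * (1 - c ^ 2) * (ximin c - c)) := by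
  unfold g1
  linear_combination (27 * ximin c + 37 * c) * ximin_quadratic hc

theorem g1_ximin_neg (hc : -1 < c) (hc' : c < 1) : g1 c (ximin c) < 0 := by
  have hsq : c ^ 2 < 1 := (sq_lt_one_iff_abs_lt_one c).2 (abs_lt.2 ⟨hc, hc'⟩)
  have lt_ximin : c < ximin c := hc'.trans (one_lt_ximin hc hc')
  rw [g1_ximin (by linarith), neg_lt_zero]
  exact mul_pos (mul_pos (by norm_num) (sub_pos.2 hsq)) (sub_pos.2 lt_ximin)

end Cubic

/-- `g₁` has exactly one positive zero, it lies in `I = (ξ_min, ξ_max)`,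
and `c < 1 < ξ_min < ξ_max`. -/
theorem stmt_11 (c : ℝ) (hc0 : 0 ≤ c) (hc1 : c < 1) :
    (∃! ξ : ℝ, 0 < ξ ∧ g1 c ξ = 0) ∧
    (∀ ξ : ℝ, 0 < ξ → g1 c ξ = 0 → ξ ∈ Set.Ioo (ximin c) (ximax c)) ∧
    c < 1 ∧ 1 < ximin c ∧ ximin c < ximax c := by
  have hc : -1 < c := by linarith
  have hmin : 1 < ximin c := one_lt_ximin hc hc1
  have hlt : ximin c < ximax c := ximin_lt_ximax hc1
  have hmin_pos : 0 < ximin c := by linarith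
  have hmax_pos : 0 < ximax c := hmin_pos.trans hlt
  have hmono : StrictMonoOn (fun ξ => g1 c ξ / ξ) (Ioi 0) :=
    strictMonoOn_g1_div_self hc0 (by nlinarith)
  have hneg : g1 c (ximin c) < 0 := g1_ximin_neg hc hc1
  have hpos : 0 < g1 c (ximax c) := g1_ximax_pos hc1
  refine ⟨?_, fun ξ => ?_, hc1, hmin, hlt⟩
  · exact existsUnique_pos_zero_of_injOn_div_self (continuous_g1 c).continuousOn hmono.injOn
      hmin_pos hmax_pos hneg.le hpos.le
  · exact mem_Ioo_of_strictMonoOn_div_self hmono hmin_pos hmax_pos hneg hpos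
end

section
/- Fix a real number c with 0 ≤ c < 1. The function f(ξ) = (27ξ² + 10cξ + 3c² − 40)/(8√(1−c²)) is strictly increasing on the interval I = (ξ_min, ξ_max), and f maps I into J = (η_min, η_max); in particular, if ξ∨ ∈ I is the zero of g₁ in I and η∨ = f(ξ∨), then η∨ ∈ J. -/
noncomputable def etamin (c : ℝ) : ℝ := Real.sqrt (1 - c^2)/3

noncomputable def etamax (c : ℝ) : ℝ := ((3 - c)/(1 + c))*(Real.sqrt (1 - c^2)/3)

noncomputable def f (c ξ : ℝ) : ℝ := (27*ξ^2 + 10*c*ξ + 3*c^2 - 40)/(8*Real.sqrt (1 - c^2))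

/-! The parabola `27ξ² + 10cξ + 3c² - 40` has its vertex at `-5c/27`, to the left of `ξ_min`, so
`f` is strictly increasing on `[ξ_min, ∞)`. The endpoints correspond exactly: `f(ξ_min) = η_min` and
`f(ξ_max) = η_max`. -/

theorem strictMonoOn_quadratic {K : Type*} [Field K] [LinearOrder K] [IsStrictOrderedRing K]
    {a : K} (ha : 0 < a) (b d : K) :
    StrictMonoOn (fun x ↦ a * x ^ 2 + b * x + d) (Set.Ici (-b / (2 * a))) := by
  intro x hx y _ hxy
  have hvertex : 0 ≤ 2 * a * x + b := by
    have := (div_le_iff₀' (by positivity : 0 < 2 * a)).1 (Set.mem_Ici.1 hx)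
    linarith
  have hslope : 0 < a * (x + y) + b := by linarith [mul_lt_mul_of_pos_left hxy ha]
  have hdiff : 0 < (y - x) * (a * (x + y) + b) := mul_pos (sub_pos.2 hxy) hslope
  linarith

theorem one_sub_sq_pos_of_abs_lt_one {R : Type*} [Ring R] [LinearOrder R] [IsStrictOrderedRing R]
    {a : R} (ha : |a| < 1) : 0 < 1 - a ^ 2 :=
  sub_pos.2 ((sq_lt_one_iff_abs_lt_one a).2 ha)

theorem neg_five_mul_div_le_ximin (c : ℝ) : -5 * c / 27 ≤ ximin c := by
  have : 0 ≤ 8 * √2 * √(9 - c ^ 2) := by positivity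
  unfold ximin
  linarith

section

variable {c : ℝ}

theorem f_strictMonoOn (hc : |c| < 1) : StrictMonoOn (f c) (Set.Ici (ximin c)) := by
  have hden : 0 < 8 * √(1 - c ^ 2) :=
    mul_pos (by norm_num) (Real.sqrt_pos.2 (one_sub_sq_pos_of_abs_lt_one hc))
  have hvertex : -(10 * c) / (2 * 27) ≤ ximin c := by
    linarith [neg_five_mul_div_le_ximin c]
  intro x hx y hy hxy
  have hquad := strictMonoOn_quadratic (by norm_num : (0 : ℝ) < 27) (10 * c) (3 * c ^ 2 - 40)
    (hvertex.trans hx) (hvertex.trans hy) hxy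
  refine div_lt_div_of_pos_right ?_ hden
  linarith

theorem f_ximin (hc : |c| < 1) : f c (ximin c) = etamin c := by
  have hpos := one_sub_sq_pos_of_abs_lt_one hc
  have hden : √(1 - c ^ 2) ≠ 0 := (Real.sqrt_pos.2 hpos).ne'
  have hshift : 27 * ximin c + 5 * c = 8 * √2 * √(9 - c ^ 2) := by
    unfold ximin
    ring
  have hsquare : (27 * ximin c + 5 * c) ^ 2 = 128 * (9 - c ^ 2) := by
    rw [hshift, mul_pow, mul_pow, Real.sq_sqrt (by norm_num), Real.sq_sqrt (by linarith)]
    ring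
  have hnum : 27 * ximin c ^ 2 + 10 * c * ximin c + 3 * c ^ 2 - 40 = 8 * (1 - c ^ 2) / 3 := by
    linarith
  rw [f, etamin, hnum]
  field_simp
  rw [Real.sq_sqrt hpos.le]

theorem f_ximax (hc : |c| < 1) : f c (ximax c) = etamax c := by
  have hpos := one_sub_sq_pos_of_abs_lt_one hc
  have hden : √(1 - c ^ 2) ≠ 0 := (Real.sqrt_pos.2 hpos).ne'
  have hone_add : 1 + c ≠ 0 := by linarith [(abs_lt.1 hc).1]
  have hnum : 27 * ximax c ^ 2 + 10 * c * ximax c + 3 * c ^ 2 - 40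
      = 8 * ((3 - c) * (1 - c)) / 3 := by
    unfold ximax
    ring
  rw [f, etamax, hnum]
  field_simp
  rw [Real.sq_sqrt hpos.le]
  ring

theorem f_mapsTo_Ioo (hc : |c| < 1) :
    Set.MapsTo (f c) (Set.Ioo (ximin c) (ximax c)) (Set.Ioo (etamin c) (etamax c)) := by
  rw [← f_ximin hc, ← f_ximax hc]
  exact ((f_strictMonoOn hc).mono Set.Icc_subset_Ici_self).mapsTo_Ioo

end

theorem stmt_12_general (c : ℝ) (hc : |c| < 1) :
    StrictMonoOn (f c) (Set.Ioo (ximin c) (ximax c)) ∧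
    Set.MapsTo (f c) (Set.Ioo (ximin c) (ximax c)) (Set.Ioo (etamin c) (etamax c)) ∧
    ∀ ξ ∈ Set.Ioo (ximin c) (ximax c), g1 c ξ = 0 →
      f c ξ ∈ Set.Ioo (etamin c) (etamax c) :=
  ⟨(f_strictMonoOn hc).mono fun _ hξ ↦ hξ.1.le, f_mapsTo_Ioo hc, fun _ hξ _ ↦ f_mapsTo_Ioo hc hξ⟩

/-- `f` is strictly increasing on `I = (ξ_min, ξ_max)` and maps `I` into `J = (η_min, η_max)`;
in particular the zero `ξ∨` of `g₁` in `I` satisfies `η∨ = f(ξ∨) ∈ J`. -/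
theorem stmt_12 (c : ℝ) (hc0 : 0 ≤ c) (hc1 : c < 1) :
    StrictMonoOn (f c) (Set.Ioo (ximin c) (ximax c)) ∧
    Set.MapsTo (f c) (Set.Ioo (ximin c) (ximax c)) (Set.Ioo (etamin c) (etamax c)) ∧
    ∀ ξ ∈ Set.Ioo (ximin c) (ximax c), g1 c ξ = 0 →
      f c ξ ∈ Set.Ioo (etamin c) (etamax c) :=
  stmt_12_general c (abs_lt.2 ⟨by linarith, hc1⟩)
end

section
/- Fix a real number c with 0 ≤ c < 1, and let (ξ∨, η∨) be the unique solution with ξ∨ ∈ I = (ξ_min, ξ_max) of the system ψ(1/2, ξ, η) = 0 and ∂ψ/∂t(1/2, ξ, η) = 0, so that g₁(ξ∨) = 0 and η∨ = (27ξ∨² + 10cξ∨ + 3c² − 40)/(8√(1−c²)). Suppose ξ̄ and η̄ are real numbers with ξ∨ < ξ̄ ≤ (4−c)/3, η̄ ≤ η∨, and c·ξ̄ + √(1−c²)·η̄ > c·ξ∨ + √(1−c²)·η∨. Then ψ(1/2, ξ̄, η̄) > 0; in particular, (ξ̄, η̄) does not induce an inner approximant. -/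
/-- Simplified radial error of the cubic G⁰ Bézier approximant of the unit circular arc. -/
noncomputable def psiC (c t ξ η : ℝ) : ℝ :=
  (1/16) * (t^2 - 1) *
    ((3*η - Real.sqrt (1 - c^2))^2*t^4
      + (16*(1 - c^2) - 9*(η + Real.sqrt (1 - c^2))^2 + 9*(ξ - c)^2)*t^2
      + (16 - (3*ξ + c)^2))

/-!
Since `c² + s² = 1` for `s = √(1 - c²)`, the radial error is `ψ(t) = |p(t)|² - 1`, where `p` is the
Bézier curve with the given control points. The optimal parameters make `p(1/2)` a point of the unit
circle at which `p` is tangent to it. At `t = 1/2` position and velocity determine the endpoint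
`(c, s)`, and tangency then forces `2 s X = c Y + 3 X Y` for `p(1/2) = (X, Y)` with `X, Y > 0`.
Hence every admissible change of `(ξ, η)` displaces `p(1/2)` in a direction that makes an acute
angle with `p(1/2)` itself, and so pushes this point out of the unit disc.
-/

/-- First coordinate of the cubic Bézier curve, parametrized over `[-1, 1]`, whose control points
have first coordinates `c, ξ, ξ, c`. -/
noncomputable def bezierX (c ξ t : ℝ) : ℝ :=
  ((1 - t) ^ 3 * c + 3 * (1 - t) ^ 2 * (1 + t) * ξ
    + 3 * (1 - t) * (1 + t) ^ 2 * ξ + (1 + t) ^ 3 * c) / 8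

/-- Second coordinate of the cubic Bézier curve, parametrized over `[-1, 1]`, whose control points
have second coordinates `-s, -η, η, s`; here `s` stands for `√(1 - c²)`. -/
noncomputable def bezierY (s η t : ℝ) : ℝ :=
  (-(1 - t) ^ 3 * s - 3 * (1 - t) ^ 2 * (1 + t) * η
    + 3 * (1 - t) * (1 + t) ^ 2 * η + (1 + t) ^ 3 * s) / 8

section Curve

variable {c s ξ η t : ℝ}

lemma hasDerivAt_bezierX : HasDerivAt (bezierX c ξ) (3 / 2 * t * (c - ξ)) t := by
  have hpoly : bezierX c ξ = fun t ↦ (c + 3 * ξ) / 4 + 3 / 4 * (c - ξ) * t ^ 2 := by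
    funext t
    unfold bezierX
    ring
  rw [hpoly]
  exact (((hasDerivAt_pow 2 t).const_mul (3 / 4 * (c - ξ))).const_add
    ((c + 3 * ξ) / 4)).congr_deriv (by ring)

lemma hasDerivAt_bezierY :
    HasDerivAt (bezierY s η) (3 / 4 * ((1 + t ^ 2) * s + (1 - 3 * t ^ 2) * η)) t := by
  have hpoly : bezierY s η = fun t ↦ 3 / 4 * (s + η) * t + (s - 3 * η) / 4 * t ^ 3 := by
    funext t
    unfold bezierY
    ring
  rw [hpoly]
  exact (((hasDerivAt_id' t).const_mul (3 / 4 * (s + η))).fun_add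
    ((hasDerivAt_pow 3 t).const_mul ((s - 3 * η) / 4))).congr_deriv (by ring)

lemma eq_bezierX_half_add_deriv :
    c = bezierX c ξ (1 / 2) + 3 / 4 * deriv (bezierX c ξ) (1 / 2) := by
  rw [hasDerivAt_bezierX.deriv, bezierX]
  ring

lemma eq_deriv_sub_bezierY_half :
    s = 3 / 2 * deriv (bezierY s η) (1 / 2) - bezierY s η (1 / 2) := by
  rw [hasDerivAt_bezierY.deriv, bezierY]
  ring

lemma bezierX_sub (ξ' : ℝ) :
    bezierX c ξ' t - bezierX c ξ t = 3 / 4 * (1 - t ^ 2) * (ξ' - ξ) := by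
  unfold bezierX
  ring

lemma bezierY_sub (η' : ℝ) :
    bezierY s η' t - bezierY s η t = 3 / 4 * (1 - t ^ 2) * (t * (η' - η)) := by
  unfold bezierY
  ring

lemma lt_bezierX (hξ : c < ξ) (ht : t ^ 2 < 1) : c < bezierX c ξ t := by
  have hconvex : bezierX c ξ t = c + 3 / 4 * ((1 - t ^ 2) * (ξ - c)) := by
    unfold bezierX
    ring
  have hpos : 0 < (1 - t ^ 2) * (ξ - c) := mul_pos (sub_pos.2 ht) (sub_pos.2 hξ)
  linarith

lemma psiC_eq_bezier (hc : c ^ 2 ≤ 1) :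
    psiC c t ξ η = bezierX c ξ t ^ 2 + bezierY √(1 - c ^ 2) η t ^ 2 - 1 := by
  have hs : √(1 - c ^ 2) ^ 2 = 1 - c ^ 2 := Real.sq_sqrt (sub_nonneg.2 hc)
  unfold psiC bezierX bezierY
  linear_combination -t ^ 4 * hs

lemma deriv_psiC_eq_bezier (hc : c ^ 2 ≤ 1) :
    deriv (fun t ↦ psiC c t ξ η) t =
      2 * (bezierX c ξ t * deriv (bezierX c ξ) t
        + bezierY √(1 - c ^ 2) η t * deriv (bezierY √(1 - c ^ 2) η) t) := by
  have hX := (hasDerivAt_bezierX (c := c) (ξ := ξ) (t := t)).differentiableAt.hasDerivAt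
  have hY := (hasDerivAt_bezierY (s := √(1 - c ^ 2)) (η := η) (t := t)).differentiableAt.hasDerivAt
  simp only [psiC_eq_bezier hc]
  convert (((hX.fun_pow 2).fun_add (hY.fun_pow 2)).sub_const 1).deriv using 1
  ring

end Curve

section Tangency

-- For position `(x, y)` and velocity `(u, v)` at `t = 1/2`, the endpoint at `t = 1` is
-- `(x + 3/4 u, 3/2 v - y)`, because `bezierX` is even and `bezierY` odd, both of degree at most 3.
variable {x y u v : ℝ}

lemma sq_add_four_mul_sq_eq_of_tangent (hunit : x ^ 2 + y ^ 2 = 1) (htan : x * u + y * v = 0)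
    (hend : (x + 3 / 4 * u) ^ 2 + (3 / 2 * v - y) ^ 2 = 1) : u ^ 2 + 4 * v ^ 2 = 8 * y * v := by
  linear_combination 16 / 9 * hend - 16 / 9 * hunit - 8 / 3 * htan

lemma two_mul_mul_eq_of_tangent (hunit : x ^ 2 + y ^ 2 = 1) (htan : x * u + y * v = 0)
    (hend : (x + 3 / 4 * u) ^ 2 + (3 / 2 * v - y) ^ 2 = 1) (hv : v ≠ 0) :
    2 * (3 / 2 * v - y) * x = (x + 3 / 4 * u) * y + 3 * x * y := by
  have hspeed := sq_add_four_mul_sq_eq_of_tangent hunit htan hend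
  apply mul_left_cancel₀ hv
  linear_combination 3 / 4 * x * hspeed - 3 / 4 * u * htan

lemma mul_bezierY_half_le_of_tangent {c s ξ η : ℝ} (hcs : c ^ 2 + s ^ 2 = 1) (hc : 0 ≤ c)
    (hs : 0 ≤ s) (hX : 0 ≤ bezierX c ξ (1 / 2))
    (hunit : bezierX c ξ (1 / 2) ^ 2 + bezierY s η (1 / 2) ^ 2 = 1)
    (htan : bezierX c ξ (1 / 2) * deriv (bezierX c ξ) (1 / 2)
      + bezierY s η (1 / 2) * deriv (bezierY s η) (1 / 2) = 0) :
    c * bezierY s η (1 / 2) ≤ 2 * s * bezierX c ξ (1 / 2) := by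
  have hcX := eq_bezierX_half_add_deriv (c := c) (ξ := ξ)
  have hsY := eq_deriv_sub_bezierY_half (s := s) (η := η)
  generalize bezierX c ξ (1 / 2) = x, deriv (bezierX c ξ) (1 / 2) = u,
    bezierY s η (1 / 2) = y, deriv (bezierY s η) (1 / 2) = v at *
  rcases le_or_gt y 0 with hy | hy
  · calc c * y ≤ 0 := mul_nonpos_of_nonneg_of_nonpos hc hy
      _ ≤ 2 * s * x := by positivity
  · have hv : v ≠ 0 := by
      rintro rfl
      linarith
    rw [hcX, hsY] at hcs
    have hslope : 2 * s * x = c * y + 3 * x * y := by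
      rw [hcX, hsY]
      exact two_mul_mul_eq_of_tangent hunit htan hcs hv
    rw [hslope]
    exact le_add_of_nonneg_right (by positivity)

end Tangency

lemma sq_add_sq_lt_sq_add_sq_of_inner_sub_pos {x y x' y' : ℝ}
    (h : 0 < x * (x' - x) + y * (y' - y)) : x ^ 2 + y ^ 2 < x' ^ 2 + y' ^ 2 := by
  linarith [sq_nonneg (x' - x), sq_nonneg (y' - y)]

lemma mul_lt_mul_of_slope_le {c s x y a b : ℝ} (hs : 0 < s) (hx : 0 < x) (hslope : c * y ≤ s * x)
    (ha : 0 < a) (hb : 0 ≤ b) (hab : s * b < c * a) : y * b < x * a := by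
  rcases le_or_gt y 0 with hy | hy
  · exact (mul_nonpos_of_nonpos_of_nonneg hy hb).trans_lt (mul_pos hx ha)
  · refine lt_of_mul_lt_mul_left ?_ hs.le
    calc s * (y * b) = y * (s * b) := by ring
      _ < y * (c * a) := mul_lt_mul_of_pos_left hab hy
      _ = c * y * a := by ring
      _ ≤ s * x * a := mul_le_mul_of_nonneg_right hslope ha.le
      _ = s * (x * a) := by ring

lemma bezier_sq_add_sq_lt {c s t ξ η ξ' η' : ℝ} (hs : 0 < s) (ht : t ^ 2 < 1)
    (hX : 0 < bezierX c ξ t) (hslope : c * (t * bezierY s η t) ≤ s * bezierX c ξ t)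
    (hξ : ξ < ξ') (hη : η' ≤ η) (hline : c * ξ + s * η < c * ξ' + s * η') :
    bezierX c ξ t ^ 2 + bezierY s η t ^ 2 < bezierX c ξ' t ^ 2 + bezierY s η' t ^ 2 := by
  have hinner : t * bezierY s η t * (η - η') < bezierX c ξ t * (ξ' - ξ) :=
    mul_lt_mul_of_slope_le hs hX hslope (sub_pos.2 hξ) (sub_nonneg.2 hη) (by linarith)
  have hweight : 0 < 3 / 4 * (1 - t ^ 2) := by linarith
  apply sq_add_sq_lt_sq_add_sq_of_inner_sub_pos
  rw [bezierX_sub, bezierY_sub]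
  linarith [mul_lt_mul_of_pos_left hinner hweight]

lemma le_ximin {c : ℝ} (hc : c ^ 2 ≤ 1) : c ≤ ximin c := by
  have hsqrt : 4 * c ≤ √2 * √(9 - c ^ 2) := by
    rw [← Real.sqrt_mul zero_le_two]
    exact Real.le_sqrt_of_sq_le (by linarith)
  unfold ximin
  linarith

theorem stmt_13_general {c ξv ηv ξb ηb : ℝ} (hc1 : c < 1)
    (hX : 0 < bezierX c ξv (1 / 2)) (hsys0 : psiC c (1 / 2) ξv ηv = 0)
    (hsys1 : deriv (fun t ↦ psiC c t ξv ηv) (1 / 2) = 0)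
    (hξ : ξv < ξb) (hη : ηb ≤ ηv)
    (hline : c * ξv + √(1 - c ^ 2) * ηv < c * ξb + √(1 - c ^ 2) * ηb) :
    0 < psiC c (1 / 2) ξb ηb ∧ ¬ (∀ t ∈ Set.Icc (-1 : ℝ) 1, psiC c t ξb ηb ≤ 0) := by
  have hc0 : 0 < c := by
    have hη' := mul_le_mul_of_nonneg_left hη (Real.sqrt_nonneg (1 - c ^ 2))
    exact pos_of_mul_pos_left (b := ξb - ξv) (by linarith) (sub_pos.2 hξ).le
  have hc : c ^ 2 < 1 := pow_lt_one₀ hc0.le hc1 two_ne_zero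
  have hs : 0 < √(1 - c ^ 2) := Real.sqrt_pos.2 (sub_pos.2 hc)
  have hcs : c ^ 2 + √(1 - c ^ 2) ^ 2 = 1 := by rw [Real.sq_sqrt (sub_nonneg.2 hc.le)]; ring
  rw [psiC_eq_bezier hc.le, sub_eq_zero] at hsys0
  rw [deriv_psiC_eq_bezier hc.le, mul_eq_zero_iff_left two_ne_zero] at hsys1
  have hslope : c * (1 / 2 * bezierY √(1 - c ^ 2) ηv (1 / 2)) ≤
      √(1 - c ^ 2) * bezierX c ξv (1 / 2) := by
    linarith [mul_bezierY_half_le_of_tangent hcs hc0.le hs.le hX.le hsys0 hsys1]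
  have hpos : 0 < psiC c (1 / 2) ξb ηb := by
    rw [psiC_eq_bezier hc.le, sub_pos]
    exact hsys0.symm.trans_lt (bezier_sq_add_sq_lt hs (by norm_num) hX hslope hξ hη hline)
  exact ⟨hpos, fun hinner ↦ (hinner (1 / 2) (by norm_num)).not_gt hpos⟩

/-- If `(ξ̄, η̄)` lies in the critical triangle beyond the optimal solution, then
`ψ(1/2, ξ̄, η̄) > 0`, so `(ξ̄, η̄)` does not induce an inner approximant. -/
theorem stmt_13 (c : ℝ) (hc0 : 0 ≤ c) (hc1 : c < 1)
    (ξv ηv : ℝ) (hmem : ξv ∈ Set.Ioo (ximin c) (ximax c))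
    (hg1 : g1 c ξv = 0)
    (hηv : ηv = (27*ξv^2 + 10*c*ξv + 3*c^2 - 40)/(8*Real.sqrt (1 - c^2)))
    (hsys0 : psiC c (1/2) ξv ηv = 0)
    (hsys1 : deriv (fun t => psiC c t ξv ηv) (1/2) = 0)
    (ξb ηb : ℝ) (hξb1 : ξv < ξb) (hξb2 : ξb ≤ (4 - c)/3) (hηb : ηb ≤ ηv)
    (hline : c*ξv + Real.sqrt (1 - c^2)*ηv < c*ξb + Real.sqrt (1 - c^2)*ηb) :
    0 < psiC c (1/2) ξb ηb ∧
    ¬ (∀ t ∈ Set.Icc (-1 : ℝ) 1, psiC c t ξb ηb ≤ 0) := by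
  have hc : c^2 ≤ 1 := pow_le_one₀ hc0 hc1.le
  have hX : c < bezierX c ξv (1/2) := lt_bezierX ((le_ximin hc).trans_lt hmem.1) (by norm_num)
  exact stmt_13_general hc1 (hc0.trans_lt hX) hsys0 hsys1 hξb1 hηb hline
end
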